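/- arXiv:2604.15266 — 8 statements merged into one kernel-verified Lean document; each statement's English description precedes it below -/
import Mathlib

section
/- Characterization of sound prophecy as a safety problem (Theorem 5.2): let (ι, τ, β) be a safety problem over S, W a witness type, and P : S → W → Prop a prophecy predicate. Then P is a sound prophecy for (ι, τ, β) if and only if the soundness problem Π^sound_P is safe. -/
variable {S W : Type*}

/-- The safety problem `(ι, τ, β)` is safe if there is no finite `τ`-trace from an
initial state to a bad state. -/
def IsSafe {A : Type*} (init : Set A) (tr : Set (A × A)) (bad : Set A) : Prop :=
  ¬ ∃ (n : ℕ) (σ : ℕ → A), (∀ i < n, (σ i, σ (i + 1)) ∈ tr) ∧ σ 0 ∈ init ∧ σ n ∈ bad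

/-- `P` is a sound prophecy for `(ι, τ, β)`: every finite error trace admits a witness
`w` satisfying `P` at every point of the trace. -/
def IsSoundProphecy (ι : Set S) (τ : Set (S × S)) (β : Set S) (P : S → W → Prop) : Prop :=
  ∀ (n : ℕ) (σ : ℕ → S), (∀ i < n, (σ i, σ (i + 1)) ∈ τ) → σ 0 ∈ ι → σ n ∈ β →
    ∃ w : W, ∀ i ≤ n, P (σ i) w

/-- Initial states of the soundness problem `Π^sound_P`, over `S × Set W`. -/
def soundInit (ι : Set S) (P : S → W → Prop) : Set (S × Set W) :=
  {p | p.1 ∈ ι ∧ ∀ w, P p.1 w → w ∈ p.2}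

/-- Transition relation of the soundness problem `Π^sound_P`. -/
def soundTrans (τ : Set (S × S)) (P : S → W → Prop) :
    Set ((S × Set W) × (S × Set W)) :=
  {q | (q.1.1, q.2.1) ∈ τ ∧ ∀ w, (w ∈ q.1.2 ∧ P q.1.1 w ∧ P q.2.1 w) → w ∈ q.2.2}

/-- Bad states of the soundness problem `Π^sound_P`. -/
def soundBad (β : Set S) (P : S → W → Prop) : Set (S × Set W) :=
  {p | p.1 ∈ β ∧ ∀ w, P p.1 w → w ∉ p.2}

/-- Initial states of the extended problem `Π^w_P`, over `S × W`. -/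
def extInit (ι : Set S) (P : S → W → Prop) : Set (S × W) :=
  {p | p.1 ∈ ι ∧ P p.1 p.2}

/-- Transition relation of the extended problem `Π^w_P`. -/
def extTrans (τ : Set (S × S)) (P : S → W → Prop) : Set ((S × W) × (S × W)) :=
  {q | (q.1.1, q.2.1) ∈ τ ∧ q.2.2 = q.1.2 ∧ P q.1.1 q.1.2 ∧ P q.2.1 q.2.2}

/-- Bad states of the extended problem `Π^w_P`. -/
def extBad (β : Set S) (P : S → W → Prop) : Set (S × W) :=
  {p | p.1 ∈ β ∧ P p.1 p.2}

/-! Along a trace `σ`, let `C i` be the set of witnesses that satisfy `P` at all of `σ 0, …, σ i`.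
The constraints of the soundness problem on its second component are lower bounds, and `C` is the
least solution to them. So `σ` extends to an error trace of the soundness problem exactly when it
does so with second component `C`, and the bad-state condition at time `n` then says that
`C n = ∅`: no witness satisfies `P` throughout. -/

/-- The witnesses that satisfy `P` at every state of `σ` up to time `n`. These sets form the least
second component with which the trace `σ` lifts to the soundness problem. -/
def commonWitnesses (P : S → W → Prop) (σ : ℕ → S) (n : ℕ) : Set W :=
  Set.dissipate (fun i ↦ {w | P (σ i) w}) n

section CommonWitnesses

variable {ι β : Set S} {τ : Set (S × S)} {P : S → W → Prop} {σ : ℕ → S} {n : ℕ} {w : W}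

theorem mem_commonWitnesses : w ∈ commonWitnesses P σ n ↔ ∀ i ≤ n, P (σ i) w :=
  Set.mem_dissipate

theorem commonWitnesses_zero : commonWitnesses P σ 0 = {w | P (σ 0) w} :=
  Set.dissipate_zero_nat _

theorem commonWitnesses_succ :
    commonWitnesses P σ (n + 1) = commonWitnesses P σ n ∩ {w | P (σ (n + 1)) w} :=
  Set.dissipate_succ _ n

theorem commonWitnesses_subset_setOf : commonWitnesses P σ n ⊆ {w | P (σ n) w} :=
  Set.dissipate_subset le_rfl

theorem commonWitnesses_subset_snd {ρ : ℕ → S × Set W} (hinit : ρ 0 ∈ soundInit ι P)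
    (htrans : ∀ i < n, (ρ i, ρ (i + 1)) ∈ soundTrans τ P) :
    commonWitnesses P (fun i ↦ (ρ i).1) n ⊆ (ρ n).2 := by
  induction n with
  | zero =>
    rw [commonWitnesses_zero]
    exact hinit.2
  | succ n ih =>
    rw [commonWitnesses_succ]
    rintro w ⟨hw, hnext⟩
    have hmem : w ∈ (ρ n).2 := ih (fun i hi ↦ htrans i (Nat.lt_succ_of_lt hi)) hw
    exact (htrans n n.lt_succ_self).2 w ⟨hmem, commonWitnesses_subset_setOf hw, hnext⟩

theorem mk_commonWitnesses_mem_soundInit_iff :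
    (σ 0, commonWitnesses P σ 0) ∈ soundInit ι P ↔ σ 0 ∈ ι := by
  rw [commonWitnesses_zero]
  exact and_iff_left fun _ hw ↦ hw

theorem mk_commonWitnesses_mem_soundTrans_iff :
    ((σ n, commonWitnesses P σ n), (σ (n + 1), commonWitnesses P σ (n + 1))) ∈ soundTrans τ P ↔
      (σ n, σ (n + 1)) ∈ τ := by
  rw [commonWitnesses_succ]
  exact and_iff_left fun _ ⟨hw, _, hnext⟩ ↦ ⟨hw, hnext⟩

theorem mk_commonWitnesses_mem_soundBad_iff :
    (σ n, commonWitnesses P σ n) ∈ soundBad β P ↔ σ n ∈ β ∧ commonWitnesses P σ n = ∅ := by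
  rw [Set.eq_empty_iff_forall_notMem]
  exact and_congr_right fun _ ↦ forall_congr' fun _ ↦
    ⟨fun h hw ↦ h (commonWitnesses_subset_setOf hw) hw, fun h _ ↦ h⟩

end CommonWitnesses

/-- Characterization of sound prophecy as a safety problem (Theorem 5.2): `P` is a sound
prophecy for `(ι, τ, β)` iff the soundness problem `Π^sound_P` is safe. -/
theorem soundProphecy_iff_soundProblem_safe (ι β : Set S) (τ : Set (S × S))
    (P : S → W → Prop) :
    IsSoundProphecy ι τ β P ↔ IsSafe (soundInit ι P) (soundTrans τ P) (soundBad β P) := by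
  constructor
  · rintro hsound ⟨n, ρ, htrans, hinit, hbad⟩
    obtain ⟨w, hw⟩ := hsound n (fun i ↦ (ρ i).1) (fun i hi ↦ (htrans i hi).1) hinit.1 hbad.1
    have hmem : w ∈ (ρ n).2 := commonWitnesses_subset_snd hinit htrans (mem_commonWitnesses.2 hw)
    exact hbad.2 w (hw n le_rfl) hmem
  · intro hsafe n σ htrans hinit hbad
    suffices hne : (commonWitnesses P σ n).Nonempty from
      hne.imp fun _ ↦ mem_commonWitnesses.1
    by_contra hempty
    rw [Set.not_nonempty_iff_eq_empty] at hempty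
    exact hsafe ⟨n, fun i ↦ (σ i, commonWitnesses P σ i),
      fun i hi ↦ mk_commonWitnesses_mem_soundTrans_iff.2 (htrans i hi),
      mk_commonWitnesses_mem_soundInit_iff.2 hinit,
      mk_commonWitnesses_mem_soundBad_iff.2 ⟨hbad, hempty⟩⟩
end

section
/- Prophecy preserves safety (Definition 5.1): let (ι, τ, β) be a safety problem over S, W a witness type, and P : S → W → Prop a sound prophecy for (ι, τ, β). Then (ι, τ, β) is safe if and only if the extended problem Π^w_P is safe. -/
variable {S W : Type*}

/-- `IsErrorTrace init tr bad n σ`: the first `n + 1` states of `σ` form a trace of `tr` from `init`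
to `bad`. As in `IsSafe`, a finite trace is encoded by an infinite sequence whose values beyond
index `n` are irrelevant, so that `IsSafe` unfolds to the absence of error traces. -/
def IsErrorTrace {A : Type*} (init : Set A) (tr : Set (A × A)) (bad : Set A) (n : ℕ)
    (σ : ℕ → A) : Prop :=
  (∀ i < n, (σ i, σ (i + 1)) ∈ tr) ∧ σ 0 ∈ init ∧ σ n ∈ bad

namespace IsErrorTrace

theorem map {A B : Type*} {init bad : Set A} {tr : Set (A × A)} {init' bad' : Set B}
    {tr' : Set (B × B)} {n : ℕ} {σ : ℕ → A} {f : A → B} (hσ : IsErrorTrace init tr bad n σ)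
    (hinit : Set.MapsTo f init init') (htr : Set.MapsTo (Prod.map f f) tr tr')
    (hbad : Set.MapsTo f bad bad') : IsErrorTrace init' tr' bad' n (f ∘ σ) :=
  ⟨fun i hi => htr (hσ.1 i hi), hinit hσ.2.1, hbad hσ.2.2⟩

variable {ι β : Set S} {τ : Set (S × S)} {P : S → W → Prop} {n : ℕ}

theorem fst_comp {σ : ℕ → S × W}
    (hσ : IsErrorTrace (extInit ι P) (extTrans τ P) (extBad β P) n σ) :
    IsErrorTrace ι τ β n (Prod.fst ∘ σ) :=
  hσ.map (fun _ hp => hp.1) (fun _ hq => hq.1) (fun _ hp => hp.1)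

theorem prodMk_const {σ : ℕ → S} {w : W} (hσ : IsErrorTrace ι τ β n σ)
    (hw : ∀ i ≤ n, P (σ i) w) :
    IsErrorTrace (extInit ι P) (extTrans τ P) (extBad β P) n (fun i => (σ i, w)) := by
  obtain ⟨hstep, hinit, hbad⟩ := hσ
  exact ⟨fun i hi => ⟨hstep i hi, rfl, hw i hi.le, hw (i + 1) hi⟩,
    ⟨hinit, hw 0 n.zero_le⟩, ⟨hbad, hw n le_rfl⟩⟩

end IsErrorTrace

theorem IsSafe.extended {ι β : Set S} {τ : Set (S × S)} (hsafe : IsSafe ι τ β)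
    (P : S → W → Prop) : IsSafe (extInit ι P) (extTrans τ P) (extBad β P) :=
  fun ⟨n, _, hσ⟩ => hsafe ⟨n, _, IsErrorTrace.fst_comp hσ⟩

theorem IsSoundProphecy.isSafe_of_extended {ι β : Set S} {τ : Set (S × S)} {P : S → W → Prop}
    (h : IsSoundProphecy ι τ β P) (hsafe : IsSafe (extInit ι P) (extTrans τ P) (extBad β P)) :
    IsSafe ι τ β := by
  rintro ⟨n, σ, hσ⟩
  obtain ⟨w, hw⟩ := h n σ hσ.1 hσ.2.1 hσ.2.2
  exact hsafe ⟨n, _, IsErrorTrace.prodMk_const hσ hw⟩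

/-- Prophecy preserves safety (Definition 5.1): if `P` is a sound prophecy for
`(ι, τ, β)`, then `(ι, τ, β)` is safe iff the extended problem `Π^w_P` is safe. -/
theorem safe_iff_extended_safe_of_soundProphecy (ι β : Set S) (τ : Set (S × S))
    (P : S → W → Prop) (h : IsSoundProphecy ι τ β P) :
    IsSafe ι τ β ↔ IsSafe (extInit ι P) (extTrans τ P) (extBad β P) :=
  ⟨fun hsafe => hsafe.extended P, h.isSafe_of_extended⟩
end

section
/- Soundness of the (Proph) rule (used in Theorem 5.4): let (ι, τ, β) be a safety problem over S, W a witness type, and P : S → W → Prop. If the soundness problem Π^sound_P is safe and the extended problem Π^w_P is safe, then (ι, τ, β) is safe. -/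
variable {S W : Type*}

/-!
Along an error trace, let the second component of the soundness problem be the set of witnesses
that have satisfied the prophecy so far. This choice meets the initial and transition constraints,
so safety of the soundness problem forces a witness to survive to the end of the trace. Pairing the
trace with that witness gives an error trace of the extended problem.
-/

/-- The witnesses satisfying the prophecy `P` at the states `σ 0, …, σ i`: the least choice of
second component along `σ` that the soundness problem allows. -/
def survivingWitnesses (P : S → W → Prop) (σ : ℕ → S) (i : ℕ) : Set W :=
  {w | ∀ j ≤ i, P (σ j) w}

theorem survivingWitnesses_zero (P : S → W → Prop) (σ : ℕ → S) :
    survivingWitnesses P σ 0 = {w | P (σ 0) w} := by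
  simp [survivingWitnesses]

theorem survivingWitnesses_succ (P : S → W → Prop) (σ : ℕ → S) (i : ℕ) :
    survivingWitnesses P σ (i + 1) = survivingWitnesses P σ i ∩ {w | P (σ (i + 1)) w} := by
  ext w
  simp [survivingWitnesses, Nat.le_succ_iff, or_imp, forall_and]

section

variable {ι β : Set S} {τ : Set (S × S)} {P : S → W → Prop}

theorem mk_survivingWitnesses_mem_soundInit {σ : ℕ → S} (hι : σ 0 ∈ ι) :
    (σ 0, survivingWitnesses P σ 0) ∈ soundInit ι P :=
  ⟨hι, fun _ hw => (survivingWitnesses_zero P σ).ge hw⟩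

theorem mk_survivingWitnesses_mem_soundTrans {σ : ℕ → S} {i : ℕ} (hτ : (σ i, σ (i + 1)) ∈ τ) :
    ((σ i, survivingWitnesses P σ i), (σ (i + 1), survivingWitnesses P σ (i + 1))) ∈
      soundTrans τ P :=
  ⟨hτ, fun _ ⟨hmem, _, hnext⟩ => (survivingWitnesses_succ P σ i).ge ⟨hmem, hnext⟩⟩

theorem isSoundProphecy_of_isSafe_sound
    (hSound : IsSafe (soundInit ι P) (soundTrans τ P) (soundBad β P)) :
    IsSoundProphecy ι τ β P := by
  intro n σ hτ hι hβ
  by_contra hno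
  have hbad : (σ n, survivingWitnesses P σ n) ∈ soundBad β P :=
    ⟨hβ, fun w _ hw => hno ⟨w, hw⟩⟩
  exact hSound ⟨n, fun i => (σ i, survivingWitnesses P σ i),
    fun i hi => mk_survivingWitnesses_mem_soundTrans (hτ i hi),
    mk_survivingWitnesses_mem_soundInit hι, hbad⟩

theorem IsSoundProphecy.isSafe_of_isSafe_ext (hP : IsSoundProphecy ι τ β P)
    (hExt : IsSafe (extInit ι P) (extTrans τ P) (extBad β P)) :
    IsSafe ι τ β := by
  rintro ⟨n, σ, hτ, hι, hβ⟩
  obtain ⟨w, hw⟩ := hP n σ hτ hι hβ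
  have htrans : ∀ i < n, ((σ i, w), (σ (i + 1), w)) ∈ extTrans τ P :=
    fun i hi => ⟨hτ i hi, rfl, hw i hi.le, hw (i + 1) hi⟩
  exact hExt ⟨n, fun i => (σ i, w), htrans, ⟨hι, hw 0 n.zero_le⟩, ⟨hβ, hw n le_rfl⟩⟩

end

/-- Soundness of the (Proph) rule (used in Theorem 5.4): if the soundness problem
`Π^sound_P` is safe and the extended problem `Π^w_P` is safe, then `(ι, τ, β)` is safe. -/
theorem safe_of_proph_rule (ι β : Set S) (τ : Set (S × S)) (P : S → W → Prop)
    (hSound : IsSafe (soundInit ι P) (soundTrans τ P) (soundBad β P))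
    (hExt : IsSafe (extInit ι P) (extTrans τ P) (extBad β P)) :
    IsSafe ι τ β :=
  (isSoundProphecy_of_isSafe_sound hSound).isSafe_of_isSafe_ext hExt
end

section
/- Prophecy invariant conversion (Lemma A.1 / key step of Theorem 5.7): let (ι, τ, β) be a safety problem over S, W a witness type, and P : S → W → Prop. Let ξ ⊆ S × Set W be a safe inductive invariant of the soundness problem Π^sound_P, and let ψ ⊆ S × W be a safe inductive invariant of the extended problem Π^w_P. Then the set {s ∈ S | (s, {w ∈ W | (s, w) ∈ ψ}) ∈ ξ} is a safe inductive invariant of (ι, τ, β). -/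
variable {S W : Type*}

/-- `I` is an inductive invariant for the safety problem `(init, tr, bad)`. -/
def IsInductiveInv {A : Type*} (init : Set A) (tr : Set (A × A)) (I : Set A) : Prop :=
  init ⊆ I ∧ ∀ s s', s ∈ I → (s, s') ∈ tr → s' ∈ I

/-- `I` is a safe inductive invariant for the safety problem `(init, tr, bad)`. -/
def IsSafeInductiveInv {A : Type*} (init : Set A) (tr : Set (A × A)) (bad : Set A)
    (I : Set A) : Prop :=
  IsInductiveInv init tr I ∧ I ∩ bad = ∅

section Preimage

variable {A B : Type*} {init bad : Set A} {tr : Set (A × A)} {init' bad' : Set B}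
  {tr' : Set (B × B)} {I : Set B} {f : A → B}

theorem IsInductiveInv.preimage (hI : IsInductiveInv init' tr' I)
    (hinit : Set.MapsTo f init init') (htr : Set.MapsTo (Prod.map f f) tr tr') :
    IsInductiveInv init tr (f ⁻¹' I) :=
  ⟨fun _ hs => hI.1 (hinit hs), fun _ _ hs hss' => hI.2 _ _ hs (htr hss')⟩

theorem IsSafeInductiveInv.preimage (hI : IsSafeInductiveInv init' tr' bad' I)
    (hinit : Set.MapsTo f init init') (htr : Set.MapsTo (Prod.map f f) tr tr')
    (hbad : Set.MapsTo f bad bad') :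
    IsSafeInductiveInv init tr bad (f ⁻¹' I) := by
  refine ⟨hI.1.preimage hinit htr, ?_⟩
  have disjoint_bad' : Disjoint I bad' := Set.disjoint_iff_inter_eq_empty.mpr hI.2
  exact ((disjoint_bad'.preimage f).mono_right hbad).inter_eq

end Preimage

/-- The map `s ↦ (s, {w | (s, w) ∈ ψ})` pairing a state with the fiber of `ψ` over it. It carries
the problem `(ι, τ, β)` into the soundness problem `Π^sound_P` exactly when `ψ` is a safe inductive
invariant of the extended problem `Π^w_P`, so safe inductive invariants of `Π^sound_P` can then be
pulled back along it. -/
def withFiber (ψ : Set (S × W)) (s : S) : S × Set W :=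
  (s, {w | (s, w) ∈ ψ})

section WithFiber

variable {ι β : Set S} {τ : Set (S × S)} {P : S → W → Prop} {ψ : Set (S × W)}

theorem mapsTo_withFiber_soundInit_iff :
    Set.MapsTo (withFiber ψ) ι (soundInit ι P) ↔ extInit ι P ⊆ ψ :=
  ⟨fun h p hp => (h hp.1).2 p.2 hp.2, fun h _ hs => ⟨hs, fun _ hP => h ⟨hs, hP⟩⟩⟩

theorem mapsTo_withFiber_soundTrans_iff :
    Set.MapsTo (Prod.map (withFiber ψ) (withFiber ψ)) τ (soundTrans τ P) ↔
      ∀ p p', p ∈ ψ → (p, p') ∈ extTrans τ P → p' ∈ ψ := by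
  constructor
  · rintro h ⟨s, w⟩ ⟨s', w'⟩ hw ⟨hss', (rfl : w' = w), hP, hP'⟩
    exact (h hss').2 _ ⟨hw, hP, hP'⟩
  · rintro h ⟨s, s'⟩ hss'
    exact ⟨hss', fun w ⟨hw, hP, hP'⟩ => h (s, w) (s', w) hw ⟨hss', rfl, hP, hP'⟩⟩

theorem mapsTo_withFiber_soundBad_iff :
    Set.MapsTo (withFiber ψ) β (soundBad β P) ↔ Disjoint ψ (extBad β P) := by
  rw [Set.disjoint_right]
  exact ⟨fun h p hp => (h hp.1).2 p.2 hp.2, fun h _ hs => ⟨hs, fun _ hP => h ⟨hs, hP⟩⟩⟩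

end WithFiber

/-- Prophecy invariant conversion (Lemma A.1 / key step of Theorem 5.7): if `ξ` is a safe
inductive invariant of the soundness problem `Π^sound_P` and `ψ` is a safe inductive
invariant of the extended problem `Π^w_P`, then `{s | (s, {w | (s, w) ∈ ψ}) ∈ ξ}` is a
safe inductive invariant of `(ι, τ, β)`. -/
theorem prophecy_invariant_conversion (ι β : Set S) (τ : Set (S × S)) (P : S → W → Prop)
    (ξ : Set (S × Set W)) (ψ : Set (S × W))
    (hξ : IsSafeInductiveInv (soundInit ι P) (soundTrans τ P) (soundBad β P) ξ)
    (hψ : IsSafeInductiveInv (extInit ι P) (extTrans τ P) (extBad β P) ψ) :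
    IsSafeInductiveInv ι τ β {s : S | (s, {w : W | (s, w) ∈ ψ}) ∈ ξ} := by
  obtain ⟨⟨hinit, htrans⟩, hbad⟩ := hψ
  exact hξ.preimage (f := withFiber ψ)
    (mapsTo_withFiber_soundInit_iff.mpr hinit)
    (mapsTo_withFiber_soundTrans_iff.mpr htrans)
    (mapsTo_withFiber_soundBad_iff.mpr (Set.disjoint_iff_inter_eq_empty.mpr hbad))
end

section
/- Soundness of the (Proph-Select) heuristic: let (ι, τ, β) be a safety problem over S, W a witness type, P : S → W → Prop, and θ ⊆ S. Suppose: (1) ι ⊆ {s | ∃ w, P s w}; (2) the set {s | ∃ w, P s w} is closed under τ; (3) every s ∉ θ satisfies P s w for all w ∈ W; (4) θ is closed under τ ((s, s') ∈ τ and s ∈ θ imply s' ∈ θ); and (5) if P s w, s ∈ θ, and (s, s') ∈ τ, then P s' w. Then P is a sound prophecy for (ι, τ, β). -/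
/-!
Along a trace, `θ` is entered at most once and never left. A witness for the first state in `θ`
covers every earlier state, since outside `θ` all witnesses are accepted, and every later one,
since inside `θ` an accepted witness stays accepted. If the trace never meets `θ`, any witness will
do. So a witness need only be selected on entering `θ`, and one exists there because having a
witness is an inductive invariant.
-/

variable {S W : Type*}

/-- `σ 0, …, σ n` is a finite `τ`-trace. As in `IsSoundProphecy`, `σ` is a total sequence whose
values beyond the index `n` are irrelevant. -/
def IsTrace (τ : Set (S × S)) (n : ℕ) (σ : ℕ → S) : Prop :=
  ∀ i < n, (σ i, σ (i + 1)) ∈ τ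

/-- The set of states `A` is closed under `τ`, i.e. preserved by every transition. -/
def IsClosedUnder (τ : Set (S × S)) (A : Set S) : Prop :=
  ∀ ⦃s s'⦄, (s, s') ∈ τ → s ∈ A → s' ∈ A

section Trace

variable {τ : Set (S × S)} {n : ℕ} {σ : ℕ → S}

theorem IsClosedUnder.mem_of_le {A : Set S} (hA : IsClosedUnder τ A) (hσ : IsTrace τ n σ)
    {k i : ℕ} (hki : k ≤ i) (hin : i ≤ n) (hk : σ k ∈ A) : σ i ∈ A := by
  induction i, hki using Nat.le_induction with
  | base => exact hk
  | succ i _ ih => exact hA (hσ i hin) (ih (Nat.le_of_succ_le hin))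

variable {P : S → W → Prop} {θ : Set S}

theorem IsTrace.forall_le_of_first_mem (hσ : IsTrace τ n σ) {w : W}
    (hout : ∀ s ∉ θ, P s w) (hin : IsClosedUnder τ {s | s ∈ θ ∧ P s w}) {k : ℕ}
    (hfirst : ∀ i < k, σ i ∉ θ) (hkθ : σ k ∈ θ) (hw : P (σ k) w) :
    ∀ i ≤ n, P (σ i) w := by
  intro i hi
  obtain hik | hki := lt_or_ge i k
  · exact hout _ (hfirst i hik)
  · exact (hin.mem_of_le hσ hki hi ⟨hkθ, hw⟩).2

theorem IsTrace.exists_forall_le (hσ : IsTrace τ n σ) (hwit : ∀ i ≤ n, ∃ w, P (σ i) w)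
    (hout : ∀ s ∉ θ, ∀ w, P s w) (hin : ∀ w, IsClosedUnder τ {s | s ∈ θ ∧ P s w}) :
    ∃ w, ∀ i ≤ n, P (σ i) w := by
  classical
  by_cases hθ : ∃ k ≤ n, σ k ∈ θ
  · obtain ⟨k, ⟨hkn, hkθ⟩, hmin⟩ := Nat.findX hθ
    have hfirst : ∀ i < k, σ i ∉ θ := fun i hi hiθ => hmin i hi ⟨hi.le.trans hkn, hiθ⟩
    obtain ⟨w, hw⟩ := hwit k hkn
    exact ⟨w, hσ.forall_le_of_first_mem (fun s hs => hout s hs w) (hin w) hfirst hkθ hw⟩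
  · push Not at hθ
    obtain ⟨w, -⟩ := hwit 0 n.zero_le
    exact ⟨w, fun i hi => hout _ (hθ i hi) w⟩

end Trace

/-- Soundness of the (Proph-Select) heuristic. -/
theorem soundProphecy_of_proph_select (ι β : Set S) (τ : Set (S × S)) (P : S → W → Prop)
    (θ : Set S)
    (h1 : ι ⊆ {s | ∃ w, P s w})
    (h2 : ∀ s s', s ∈ {s | ∃ w, P s w} → (s, s') ∈ τ → s' ∈ {s | ∃ w, P s w})
    (h3 : ∀ s ∉ θ, ∀ w : W, P s w)
    (h4 : ∀ s s', (s, s') ∈ τ → s ∈ θ → s' ∈ θ)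
    (h5 : ∀ s s' w, P s w → s ∈ θ → (s, s') ∈ τ → P s' w) :
    IsSoundProphecy ι τ β P := by
  intro n σ (hσ : IsTrace τ n σ) h0 _
  have hdom : IsClosedUnder τ {s | ∃ w, P s w} := fun s s' hτ hs => h2 s s' hs hτ
  have hwit : ∀ i ≤ n, ∃ w, P (σ i) w := fun i hi => hdom.mem_of_le hσ i.zero_le hi (h1 h0)
  have hin (w : W) : IsClosedUnder τ {s | s ∈ θ ∧ P s w} :=
    fun s s' hτ hs => ⟨h4 s s' hτ hs.1, h5 s s' w hs.2 hs.1 hτ⟩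
  exact hσ.exists_forall_le hwit h3 hin
end

section
/- Invariant construction for (Proph-Select) (claim at the end of Section 5.2): let (ι, τ, β) be a safety problem over S, W a nonempty witness type, P : S → W → Prop, and θ ⊆ S satisfying: (1) ι ⊆ {s | ∃ w, P s w}; (2) the set {s | ∃ w, P s w} is closed under τ; (3) every s ∉ θ satisfies P s w for all w ∈ W; (4) θ is closed under τ; and (5) if P s w, s ∈ θ, and (s, s') ∈ τ, then P s' w. If ψ ⊆ S × W is a safe inductive invariant of the extended problem Π^w_P, then the set {s ∈ S | (s ∉ θ ∧ ∀ w, (s, w) ∈ ψ) ∨ (s ∈ θ ∧ ∃ w, P s w ∧ (s, w) ∈ ψ)} is a safe inductive invariant of (ι, τ, β). -/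
variable {S W : Type*}

/-!
Outside `θ` every witness is admissible and all of them are tracked by `ψ`; once in `θ` a single
admissible witness persists forever. So a run commits to a witness only on reaching `θ`, and there
any witness admissible in the current state will do, because all of them were tracked up to then.
-/

/-- The projection to `S` of a set `ψ ⊆ S × W`, taken universally off `θ` and existentially,
among the `w` with `P s w`, on `θ`. It is the invariant constructed in (Proph-Select). -/
def selectInvariant (P : S → W → Prop) (θ : Set S) (ψ : Set (S × W)) : Set S :=
  {s | (s ∉ θ ∧ ∀ w, (s, w) ∈ ψ) ∨ (s ∈ θ ∧ ∃ w, P s w ∧ (s, w) ∈ ψ)}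

section SelectInvariant

variable {P : S → W → Prop} {θ : Set S} {ψ : Set (S × W)} {s : S}

theorem mem_selectInvariant_iff_of_mem (hs : s ∈ θ) :
    s ∈ selectInvariant P θ ψ ↔ ∃ w, P s w ∧ (s, w) ∈ ψ := by
  simp [selectInvariant, hs]

theorem mem_selectInvariant_iff_of_notMem (hs : s ∉ θ) :
    s ∈ selectInvariant P θ ψ ↔ ∀ w, (s, w) ∈ ψ := by
  simp [selectInvariant, hs]

theorem exists_mem_of_mem_selectInvariant [Nonempty W] (htotal : ∀ s ∉ θ, ∀ w, P s w)
    (hs : s ∈ selectInvariant P θ ψ) : ∃ w, P s w ∧ (s, w) ∈ ψ := by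
  by_cases hsθ : s ∈ θ
  · exact (mem_selectInvariant_iff_of_mem hsθ).mp hs
  · obtain ⟨w⟩ := ‹Nonempty W›
    exact ⟨w, htotal s hsθ w, (mem_selectInvariant_iff_of_notMem hsθ).mp hs w⟩

theorem subset_selectInvariant {ι : Set S} (hι : ι ⊆ {s | ∃ w, P s w})
    (htotal : ∀ s ∉ θ, ∀ w, P s w) (hψ : extInit ι P ⊆ ψ) :
    ι ⊆ selectInvariant P θ ψ := by
  intro s hs
  by_cases hsθ : s ∈ θ
  · obtain ⟨w, hw⟩ := hι hs
    exact (mem_selectInvariant_iff_of_mem hsθ).mpr ⟨w, hw, hψ ⟨hs, hw⟩⟩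
  · exact (mem_selectInvariant_iff_of_notMem hsθ).mpr fun w => hψ ⟨hs, htotal s hsθ w⟩

theorem mem_selectInvariant_of_step [Nonempty W] {τ : Set (S × S)} {s' : S}
    (hdom : ∀ s s', (∃ w, P s w) → (s, s') ∈ τ → ∃ w, P s' w)
    (htotal : ∀ s ∉ θ, ∀ w, P s w)
    (hθ : ∀ s s', (s, s') ∈ τ → s ∈ θ → s' ∈ θ)
    (hpersist : ∀ s s' w, P s w → s ∈ θ → (s, s') ∈ τ → P s' w)
    (hψ : ∀ p p', p ∈ ψ → (p, p') ∈ extTrans τ P → p' ∈ ψ)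
    (hs : s ∈ selectInvariant P θ ψ) (hτ : (s, s') ∈ τ) : s' ∈ selectInvariant P θ ψ := by
  have lift_step {w : W} (hw : P s w) (hw' : P s' w) (hmem : (s, w) ∈ ψ) : (s', w) ∈ ψ :=
    hψ (s, w) (s', w) hmem ⟨hτ, rfl, hw, hw'⟩
  obtain ⟨w, hw, hmem⟩ := exists_mem_of_mem_selectInvariant htotal hs
  by_cases hsθ : s ∈ θ
  · have hw' : P s' w := hpersist s s' w hw hsθ hτ
    exact (mem_selectInvariant_iff_of_mem (hθ s s' hτ hsθ)).mpr ⟨w, hw', lift_step hw hw' hmem⟩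
  · have hall : ∀ v, P s' v → (s', v) ∈ ψ := fun v hv =>
      lift_step (htotal s hsθ v) hv ((mem_selectInvariant_iff_of_notMem hsθ).mp hs v)
    by_cases hsθ' : s' ∈ θ
    · obtain ⟨v, hv⟩ := hdom s s' ⟨w, hw⟩ hτ
      exact (mem_selectInvariant_iff_of_mem hsθ').mpr ⟨v, hv, hall v hv⟩
    · exact (mem_selectInvariant_iff_of_notMem hsθ').mpr fun v => hall v (htotal s' hsθ' v)

theorem selectInvariant_inter_eq_empty [Nonempty W] {β : Set S}
    (htotal : ∀ s ∉ θ, ∀ w, P s w) (hψ : ψ ∩ extBad β P = ∅) :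
    selectInvariant P θ ψ ∩ β = ∅ := by
  refine Set.eq_empty_of_forall_notMem fun s ⟨hs, hβ⟩ => ?_
  obtain ⟨w, hw, hmem⟩ := exists_mem_of_mem_selectInvariant htotal hs
  exact Set.eq_empty_iff_forall_notMem.mp hψ (s, w) ⟨hmem, hβ, hw⟩

end SelectInvariant

/-- Invariant construction for (Proph-Select): under the (Proph-Select) side conditions,
if `ψ` is a safe inductive invariant of the extended problem `Π^w_P`, then
`{s | (s ∉ θ ∧ ∀ w, (s, w) ∈ ψ) ∨ (s ∈ θ ∧ ∃ w, P s w ∧ (s, w) ∈ ψ)}` is a safe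
inductive invariant of `(ι, τ, β)`. -/
theorem proph_select_invariant_construction [Nonempty W] (ι β : Set S) (τ : Set (S × S))
    (P : S → W → Prop) (θ : Set S)
    (h1 : ι ⊆ {s | ∃ w, P s w})
    (h2 : ∀ s s', s ∈ {s | ∃ w, P s w} → (s, s') ∈ τ → s' ∈ {s | ∃ w, P s w})
    (h3 : ∀ s ∉ θ, ∀ w : W, P s w)
    (h4 : ∀ s s', (s, s') ∈ τ → s ∈ θ → s' ∈ θ)
    (h5 : ∀ s s' w, P s w → s ∈ θ → (s, s') ∈ τ → P s' w)
    (ψ : Set (S × W))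
    (hψ : IsSafeInductiveInv (extInit ι P) (extTrans τ P) (extBad β P) ψ) :
    IsSafeInductiveInv ι τ β
      {s : S | (s ∉ θ ∧ ∀ w, (s, w) ∈ ψ) ∨ (s ∈ θ ∧ ∃ w, P s w ∧ (s, w) ∈ ψ)} := by
  obtain ⟨⟨hinit, hstep⟩, hsafe⟩ := hψ
  exact ⟨⟨subset_selectInvariant h1 h3 hinit,
      fun _ _ => mem_selectInvariant_of_step h2 h3 h4 h5 hstep⟩,
    selectInvariant_inter_eq_empty h3 hsafe⟩
end

section
/- In the team token-passing protocol over a type T, the set φ = {s | (∃ x, a x ∧ ¬ d x) ∨ (∀ x, ¬ p₁ x ∨ ¬ p₂ x)} is a safe inductive invariant of the safety problem (ι, τ, β): it contains all initial states, is closed under τ, and is disjoint from the bad states (Section 2.2). -/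
/-!
The first disjunct of `φ` says that the dealer of some active team has spent its token, the second
that no team has tokens at both players. A `τ₁` step produces a spent active dealer, whatever the
state was before. Activity never changes and only inactive dealers regain a token, so the first
disjunct, once true, stays true; it is incompatible with all dealers holding tokens. The second
disjunct holds initially and can be broken only by a `τ₁` step: `τ₂` takes away the token of the
first player of the very team whose second player receives one.
-/

/-- States of the team token-passing protocol over `T`: four predicates `(a, d, p₁, p₂)`. -/
abbrev TeamState (T : Type*) : Type _ := (T → Prop) × (T → Prop) × (T → Prop) × (T → Prop)

namespace Team

/-- Pointwise update of a predicate `f` at `x` to the value `b`. -/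
def upd {T : Type*} (f : T → Prop) (x : T) (b : Prop) : T → Prop :=
  fun y => (y = x ∧ b) ∨ (y ≠ x ∧ f y)

variable (T : Type*)

/-- Initial states: all second players hold no tokens. -/
def ι : Set (TeamState T) := {s | ∀ x, ¬ s.2.2.2 x}

/-- Bad states: all dealers hold a token and some team has both players holding tokens. -/
def β : Set (TeamState T) := {s | (∀ x, s.2.1 x) ∧ ∃ y, s.2.2.1 y ∧ s.2.2.2 y}

/-- Transition `τ₁`: a dealer of an active team passes a token to some first player. -/
def τ₁ : Set (TeamState T × TeamState T) :=
  {q | ∃ x y, q.1.1 x ∧ q.1.2.1 x ∧ q.2.1 = q.1.1 ∧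
    q.2.2.1 = upd q.1.2.1 x False ∧ q.2.2.2.1 = upd q.1.2.2.1 y True ∧
    q.2.2.2.2 = q.1.2.2.2}

/-- Transition `τ₂`: a first player passes a token to the second player of the team. -/
def τ₂ : Set (TeamState T × TeamState T) :=
  {q | ∃ x, q.1.2.2.1 x ∧ q.2.1 = q.1.1 ∧ q.2.2.1 = q.1.2.1 ∧
    q.2.2.2.1 = upd q.1.2.2.1 x False ∧ q.2.2.2.2 = upd q.1.2.2.2 x True}

/-- Transition `τ₃`: a dealer of an inactive team gains a token. -/
def τ₃ : Set (TeamState T × TeamState T) :=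
  {q | ∃ x, ¬ q.1.1 x ∧ q.2.1 = q.1.1 ∧ q.2.2.1 = upd q.1.2.1 x True ∧
    q.2.2.2.1 = q.1.2.2.1 ∧ q.2.2.2.2 = q.1.2.2.2}

/-- The full transition relation. -/
def τ : Set (TeamState T × TeamState T) := τ₁ T ∪ τ₂ T ∪ τ₃ T

/-- The invariant `(∃ x, a x ∧ ¬ d x) ∨ (∀ x, ¬ p₁ x ∨ ¬ p₂ x)`. -/
def φ : Set (TeamState T) :=
  {s | (∃ x, s.1 x ∧ ¬ s.2.1 x) ∨ (∀ x, ¬ s.2.2.1 x ∨ ¬ s.2.2.2 x)}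

end Team

section Inductive

variable {A B : Type*}

theorem setRel_image_union_left (R S : SetRel A B) (s : Set A) :
    SetRel.image (R ∪ S) s = R.image s ∪ S.image s := by
  ext b
  simp only [SetRel.mem_image, Set.mem_union, and_or_left, exists_or]

theorem isInductiveInv_iff_image_subset {init : Set A} {tr : SetRel A A} {I : Set A} :
    IsInductiveInv init tr I ↔ init ⊆ I ∧ tr.image I ⊆ I :=
  and_congr_right fun _ =>
    ⟨fun h s' ⟨s, hs, hstep⟩ => h s s' hs hstep, fun h s _ hs hstep => h ⟨s, hs, hstep⟩⟩

theorem isSafeInductiveInv_iff_disjoint {init : Set A} {tr : SetRel A A} {bad I : Set A} :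
    IsSafeInductiveInv init tr bad I ↔ IsInductiveInv init tr I ∧ Disjoint I bad :=
  and_congr_right fun _ => Set.disjoint_iff_inter_eq_empty.symm

end Inductive

namespace Team

section Update

variable {T : Type*} (f : T → Prop) (b : Prop)

theorem upd_self (x : T) : upd f x b x ↔ b := by
  simp only [upd, true_and, ne_eq, not_true_eq_false, false_and, or_false]

theorem upd_of_ne {x y : T} (h : y ≠ x) : upd f x b y ↔ f y := by
  simp only [upd, ne_eq, h, false_and, not_false_eq_true, true_and, false_or]

end Update

section Successors

variable {T : Type*} {s s' : TeamState T}

theorem mem_τ₁_iff :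
    (s, s') ∈ τ₁ T ↔ ∃ x y, s.1 x ∧ s.2.1 x ∧
      s' = (s.1, upd s.2.1 x False, upd s.2.2.1 y True, s.2.2.2) := by
  simp only [Prod.ext_iff]
  rfl

theorem mem_τ₂_iff :
    (s, s') ∈ τ₂ T ↔ ∃ x, s.2.2.1 x ∧
      s' = (s.1, s.2.1, upd s.2.2.1 x False, upd s.2.2.2 x True) := by
  simp only [Prod.ext_iff]
  rfl

theorem mem_τ₃_iff :
    (s, s') ∈ τ₃ T ↔ ∃ x, ¬ s.1 x ∧ s' = (s.1, upd s.2.1 x True, s.2.2.1, s.2.2.2) := by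
  simp only [Prod.ext_iff]
  rfl

end Successors

variable (T : Type*)

/-- The first disjunct of `φ`: states in which the dealer of some active team holds no token. -/
def spentDealer : Set (TeamState T) := {s | ∃ x, s.1 x ∧ ¬ s.2.1 x}

/-- The second disjunct of `φ`: states in which no team has both players holding tokens. -/
def disjointPlayers : Set (TeamState T) := {s | ∀ x, ¬ s.2.2.1 x ∨ ¬ s.2.2.2 x}

theorem φ_eq_spentDealer_union_disjointPlayers : φ T = spentDealer T ∪ disjointPlayers T := rfl

theorem ι_subset_disjointPlayers : ι T ⊆ disjointPlayers T := fun _ hs x => Or.inr (hs x)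

theorem disjoint_spentDealer_β : Disjoint (spentDealer T) (β T) :=
  Set.disjoint_left.2 fun _ ⟨x, _, hdx⟩ ⟨hd, _⟩ => hdx (hd x)

theorem disjoint_disjointPlayers_β : Disjoint (disjointPlayers T) (β T) :=
  Set.disjoint_left.2 fun _ hs ⟨_, y, hp₁, hp₂⟩ => (hs y).elim (· hp₁) (· hp₂)

theorem cod_τ₁_subset_spentDealer : SetRel.cod (τ₁ T) ⊆ spentDealer T := by
  rintro _ ⟨s, hstep⟩
  obtain ⟨x, _, hax, -, rfl⟩ := mem_τ₁_iff.1 hstep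
  exact ⟨x, hax, (upd_self s.2.1 False x).1⟩

theorem image_τ₂_spentDealer_subset : SetRel.image (τ₂ T) (spentDealer T) ⊆ spentDealer T := by
  rintro _ ⟨s, hs, hstep⟩
  obtain ⟨_, -, rfl⟩ := mem_τ₂_iff.1 hstep
  exact hs

theorem image_τ₂_disjointPlayers_subset :
    SetRel.image (τ₂ T) (disjointPlayers T) ⊆ disjointPlayers T := by
  rintro _ ⟨s, hs, hstep⟩ y
  obtain ⟨x, -, rfl⟩ := mem_τ₂_iff.1 hstep
  rcases eq_or_ne y x with rfl | hyx
  · exact Or.inl (upd_self s.2.2.1 False y).1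
  · exact (hs y).imp (mt (upd_of_ne _ False hyx).1) (mt (upd_of_ne _ True hyx).1)

theorem image_τ₃_spentDealer_subset : SetRel.image (τ₃ T) (spentDealer T) ⊆ spentDealer T := by
  rintro _ ⟨s, ⟨y, hay, hdy⟩, hstep⟩
  obtain ⟨x, hax, rfl⟩ := mem_τ₃_iff.1 hstep
  have hyx : y ≠ x := fun h => hax (h ▸ hay)
  exact ⟨y, hay, mt (upd_of_ne s.2.1 True hyx).1 hdy⟩

theorem image_τ₃_disjointPlayers_subset :
    SetRel.image (τ₃ T) (disjointPlayers T) ⊆ disjointPlayers T := by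
  rintro _ ⟨s, hs, hstep⟩
  obtain ⟨_, -, rfl⟩ := mem_τ₃_iff.1 hstep
  exact hs

theorem image_τ₁_φ_subset : SetRel.image (τ₁ T) (φ T) ⊆ φ T :=
  fun _ ⟨s, _, hstep⟩ => Or.inl (cod_τ₁_subset_spentDealer T ⟨s, hstep⟩)

theorem image_τ₂_φ_subset : SetRel.image (τ₂ T) (φ T) ⊆ φ T := by
  rw [φ_eq_spentDealer_union_disjointPlayers, SetRel.image_union]
  exact Set.union_subset_union (image_τ₂_spentDealer_subset T) (image_τ₂_disjointPlayers_subset T)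

theorem image_τ₃_φ_subset : SetRel.image (τ₃ T) (φ T) ⊆ φ T := by
  rw [φ_eq_spentDealer_union_disjointPlayers, SetRel.image_union]
  exact Set.union_subset_union (image_τ₃_spentDealer_subset T) (image_τ₃_disjointPlayers_subset T)

theorem image_τ_φ_subset : SetRel.image (τ T) (φ T) ⊆ φ T := by
  rw [τ, setRel_image_union_left, setRel_image_union_left]
  exact Set.union_subset (Set.union_subset (image_τ₁_φ_subset T) (image_τ₂_φ_subset T))
    (image_τ₃_φ_subset T)

theorem isInductiveInv_φ : IsInductiveInv (ι T) (τ T) (φ T) :=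
  isInductiveInv_iff_image_subset.2
    ⟨(ι_subset_disjointPlayers T).trans Set.subset_union_right, image_τ_φ_subset T⟩

theorem disjoint_φ_β : Disjoint (φ T) (β T) :=
  Set.disjoint_union_left.2 ⟨disjoint_spentDealer_β T, disjoint_disjointPlayers_β T⟩

end Team

/-- In the team token-passing protocol over `T`, the set
`φ = {s | (∃ x, a x ∧ ¬ d x) ∨ (∀ x, ¬ p₁ x ∨ ¬ p₂ x)}` is a safe inductive invariant of
the safety problem `(ι, τ, β)`. -/
theorem team_phi_safeInductiveInv (T : Type*) :
    IsSafeInductiveInv (Team.ι T) (Team.τ T) (Team.β T) (Team.φ T) :=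
  isSafeInductiveInv_iff_disjoint.2 ⟨Team.isInductiveInv_φ T, Team.disjoint_φ_β T⟩
end

section
/- In the dealer-token protocol with a binary token relation over a type T, the set φ = {(a, d) | ∃ x, ¬ a x ∧ ∀ y, d x y} is a safe inductive invariant of the safety problem (ι, τ, β): it contains all initial states, is closed under τ, and is disjoint from the bad states (Sections 2.3 and Example 5.8). -/
/-- States of the dealer-token protocol over `T`: a predicate `a` and a binary relation `d`. -/
abbrev DTState (T : Type*) : Type _ := (T → Prop) × (T → T → Prop)

namespace DT

variable (T : Type*)

/-- Initial states: some team is inactive, and dealers hold all tokens. -/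
def ι : Set (DTState T) := {s | (∃ x, ¬ s.1 x) ∧ ∀ x y, s.2 x y}

/-- Bad states: every dealer has lost at least one token. -/
def β : Set (DTState T) := {s | ∀ x, ∃ y, ¬ s.2 x y}

/-- Transition: a dealer of an active team loses one of its tokens;
the `a` component is unchanged. -/
def τ : Set (DTState T × DTState T) :=
  {q | q.2.1 = q.1.1 ∧
    ∃ x₀ y₀, q.1.1 x₀ ∧ ∀ x y, (q.2.2 x y ↔ (q.1.2 x y ∧ (x ≠ x₀ ∨ y ≠ y₀)))}

/-- The invariant: there is an inactive team whose dealer holds all of its tokens. -/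
def φ : Set (DTState T) := {s | ∃ x, ¬ s.1 x ∧ ∀ y, s.2 x y}

end DT

namespace DT

theorem ι_subset_φ (T : Type*) : ι T ⊆ φ T :=
  fun _ ⟨⟨x, hx⟩, hd⟩ => ⟨x, hx, hd x⟩

theorem disjoint_φ_β (T : Type*) : Disjoint (φ T) (β T) :=
  Set.disjoint_left.2 fun _ ⟨x, _, hd⟩ hβ =>
    let ⟨y, hy⟩ := hβ x
    hy (hd y)

variable {T : Type*} {s s' : DTState T}

theorem snd_apply_eq_of_mem_τ (hτ : (s, s') ∈ τ T) {x : T} (hx : ¬ s.1 x) :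
    s'.2 x = s.2 x := by
  obtain ⟨-, x₀, y₀, hx₀, hd⟩ := hτ
  have hne : x ≠ x₀ := fun h => hx (h ▸ hx₀)
  funext y
  exact propext ((hd x y).trans (and_iff_left (Or.inl hne)))

theorem mem_φ_of_mem_τ (hφ : s ∈ φ T) (hτ : (s, s') ∈ τ T) : s' ∈ φ T := by
  obtain ⟨x, hx, hd⟩ := hφ
  have hx' : ¬ s'.1 x := by rwa [hτ.1]
  have hd' : ∀ y, s'.2 x y := by rwa [snd_apply_eq_of_mem_τ hτ hx]
  exact ⟨x, hx', hd'⟩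

end DT

/-- In the dealer-token protocol over `T`, the set `φ = {(a, d) | ∃ x, ¬ a x ∧ ∀ y, d x y}`
is a safe inductive invariant of the safety problem `(ι, τ, β)`. -/
theorem dt_phi_safeInductiveInv (T : Type*) :
    IsSafeInductiveInv (DT.ι T) (DT.τ T) (DT.β T) (DT.φ T) :=
  ⟨⟨DT.ι_subset_φ T, fun _ _ => DT.mem_φ_of_mem_τ⟩, (DT.disjoint_φ_β T).inter_eq⟩
end
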